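/- Let f : B → A be a homomorphism of commutative rings, and assume A is flat as a B-module. Then for every comodule (M, ρ) over the canonical coring A ⊗_B A, the counit map ζ_M : M^co ⊗_B A → M, ζ_M(m ⊗ a) = m·a, is bijective. -/

import Mathlib

open TensorProduct

universe u

noncomputable def unitMap (B A : Type u) [CommRing B] [CommRing A] [Algebra B A]
    (N : Type u) [AddCommGroup N] [Module B N] : N →ₗ[B] N ⊗[B] A :=
  (TensorProduct.mk B N A).flip 1

/-- The action map `M ⊗_B A → M`, `m ⊗ a ↦ m · a`. -/
noncomputable def actionMap (B A : Type u) [CommRing B] [CommRing A] [Algebra B A]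
    (M : Type u) [AddCommGroup M] [Module B M] [Module A M] [IsScalarTower B A M] :
    M ⊗[B] A →ₗ[B] M :=
  TensorProduct.lift (LinearMap.mk₂ B (fun m a => a • m)
    (fun m m' a => smul_add a m m')
    (fun b m a => smul_comm a b m)
    (fun m a a' => add_smul a a' m)
    (fun b m a => smul_assoc b a m))

/-- `(M, ρ)` is a comodule over the canonical coring `A ⊗_B A`. -/
def IsCanComodule (B A : Type u) [CommRing B] [CommRing A] [Algebra B A]
    (M : Type u) [AddCommGroup M] [Module B M] [Module A M] [IsScalarTower B A M]
    (ρ : M →ₗ[B] M ⊗[B] A) : Prop :=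
  (∀ (a : A) (m : M),
      ρ (a • m) = LinearMap.lTensor M (LinearMap.mulLeft B a) (ρ m)) ∧
  (∀ m : M, LinearMap.rTensor A ρ (ρ m) = LinearMap.rTensor A (unitMap B A M) (ρ m)) ∧
  (∀ m : M, actionMap B A M (ρ m) = m)

/-- The coinvariants `M^co = {m : ρ m = m ⊗ 1}` as a `B`-submodule. -/
noncomputable def coinv (B A : Type u) [CommRing B] [CommRing A] [Algebra B A]
    (M : Type u) [AddCommGroup M] [Module B M] [Module A M] [IsScalarTower B A M]
    (ρ : M →ₗ[B] M ⊗[B] A) : Submodule B M where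
  carrier := {m | ρ m = m ⊗ₜ[B] 1}
  add_mem' := by
    intro x y hx hy
    simp only [Set.mem_setOf_eq] at *
    rw [map_add, hx, hy, add_tmul]
  zero_mem' := by simp
  smul_mem' := by
    intro b m hm
    simp only [Set.mem_setOf_eq] at *
    rw [map_smul, hm, smul_tmul']

/-- The counit map `ζ_M : M^co ⊗_B A → M`, `m ⊗ a ↦ m · a`. -/
noncomputable def counitMap (B A : Type u) [CommRing B] [CommRing A] [Algebra B A]
    (M : Type u) [AddCommGroup M] [Module B M] [Module A M] [IsScalarTower B A M]
    (ρ : M →ₗ[B] M ⊗[B] A) : (coinv B A M ρ) ⊗[B] A →ₗ[B] M :=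
  actionMap B A M ∘ₗ LinearMap.rTensor A (coinv B A M ρ).subtype

/-- If `A` is flat as a `B`-module, then for every comodule `(M, ρ)` over the canonical
coring `A ⊗_B A` the counit map `ζ_M : M^co ⊗_B A → M` is bijective. -/
theorem counit_bijective_of_flat
    (B A : Type u) [CommRing B] [CommRing A] [Algebra B A] [Module.Flat B A]
    (M : Type u) [AddCommGroup M] [Module B M] [Module A M] [IsScalarTower B A M]
    (ρ : M →ₗ[B] M ⊗[B] A) (hρ : IsCanComodule B A M ρ) :
    Function.Bijective (counitMap B A M ρ) := by
  obtain ⟨h1, h2, h3⟩ := hρ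
  have hex : Function.Exact (coinv B A M ρ).subtype (ρ - unitMap B A M) := by
    intro m
    rw [LinearMap.sub_apply, sub_eq_zero]
    constructor
    · intro h
      exact ⟨⟨m, h⟩, rfl⟩
    · rintro ⟨⟨n, hn⟩, rfl⟩
      exact hn
  have hexA := Module.Flat.rTensor_exact A hex
  have hinj : Function.Injective (LinearMap.rTensor A (coinv B A M ρ).subtype) :=
    Module.Flat.rTensor_preserves_injective_linearMap _ (Submodule.subtype_injective _)
  -- multiplication on the last two factors
  let μ : (M ⊗[B] A) ⊗[B] A →ₗ[B] M ⊗[B] A :=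
    LinearMap.lTensor M (LinearMap.mul' B A) ∘ₗ (TensorProduct.assoc B M A A).toLinearMap
  have hμu : ∀ x : M ⊗[B] A, μ (LinearMap.rTensor A (unitMap B A M) x) = x := by
    intro x
    induction x with
    | zero => simp
    | add x y hx hy => rw [map_add, map_add, hx, hy]
    | tmul m a => simp [μ, unitMap]
  have hμa : ∀ (y : M ⊗[B] A) (a : A),
      μ (y ⊗ₜ[B] a) = LinearMap.lTensor M (LinearMap.mulLeft B a) y := by
    intro y a
    induction y with
    | zero => simp
    | add x y hx hy => rw [add_tmul, map_add, map_add, hx, hy]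
    | tmul m c => simp [μ, mul_comm]
  have hμρ : ∀ x : M ⊗[B] A, μ (LinearMap.rTensor A ρ x) = ρ (actionMap B A M x) := by
    intro x
    induction x with
    | zero => simp
    | add x y hx hy => rw [map_add, map_add, hx, hy, map_add, map_add]
    | tmul m a =>
      rw [LinearMap.rTensor_tmul, hμa, ← h1]
      simp [actionMap]
  have key : ∀ x : M ⊗[B] A, LinearMap.rTensor A (ρ - unitMap B A M) x = 0 →
      ρ (actionMap B A M x) = x := by
    intro x hx
    rw [LinearMap.rTensor_sub, LinearMap.sub_apply, sub_eq_zero] at hx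
    rw [← hμρ, hx, hμu]
  constructor
  · rw [injective_iff_map_eq_zero]
    intro z hz
    apply hinj
    rw [map_zero, ← key _ ((hexA _).2 ⟨z, rfl⟩)]
    change ρ (counitMap B A M ρ z) = 0
    rw [hz, map_zero]
  · intro m
    obtain ⟨z, hz⟩ := (hexA (ρ m)).1 (by
      rw [LinearMap.rTensor_sub, LinearMap.sub_apply, sub_eq_zero]
      exact h2 m)
    refine ⟨z, ?_⟩
    change actionMap B A M (LinearMap.rTensor A (coinv B A M ρ).subtype z) = m
    rw [hz, h3]
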